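/- Let N ≥ 1, K > 0, and for each n = 1,…,N let c_n : ℝ → ℝ be convex, strictly increasing and differentiable on [0, ∞) with c_n(0) ≥ 0, and let ĉ_n(s) = (1 + s/K)·c_n(s) − (1/K)·∫₀^s c_n(x) dx. Let F ⊆ [0, ∞)^N, let s* ∈ F, and let s** ∈ F minimize ∑_{n=1}^N ĉ_n(s_n) over F. Then ∑_{n=1}^N c_n(s**_n) ≤ (1 + (max_{n} s*_n)/K) · ∑_{n=1}^N c_n(s*_n). -/

import Mathlib

open Set

theorem integral_le_sub_mul_of_monotoneOn {f : ℝ → ℝ} {a b : ℝ} (hab : a ≤ b)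
    (hf : MonotoneOn f (Icc a b)) : ∫ x in a..b, f x ≤ (b - a) * f b :=
  calc
    ∫ x in a..b, f x ≤ ∫ _ in a..b, f b :=
      intervalIntegral.integral_mono_on hab
        (MonotoneOn.intervalIntegrable (by rwa [uIcc_of_le hab])) intervalIntegrable_const
        fun _ hx => hf hx (right_mem_Icc.2 hab) hx.2
    _ = (b - a) * f b := by rw [intervalIntegral.integral_const, smul_eq_mul]

/-- The modified cost `ĉ` of a cost function `c` with parameter `K`: the cost that a supply function
equilibrium minimizes in place of `c`. It is meant for `K ≠ 0`, as `K` is a divisor. -/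
noncomputable def modifiedCost (K : ℝ) (c : ℝ → ℝ) (s : ℝ) : ℝ :=
  (1 + s / K) * c s - (1 / K) * ∫ x in (0 : ℝ)..s, c x

section SingleCost

variable {K s : ℝ} {c : ℝ → ℝ}

theorem le_modifiedCost (hK : 0 < K) (hs : 0 ≤ s) (hc : MonotoneOn c (Icc 0 s)) :
    c s ≤ modifiedCost K c s := by
  have integral_le : ∫ x in (0 : ℝ)..s, c x ≤ s * c s := by
    simpa only [sub_zero] using integral_le_sub_mul_of_monotoneOn hs hc
  calc
    c s = (1 + s / K) * c s - 1 / K * (s * c s) := by ring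
    _ ≤ modifiedCost K c s := by unfold modifiedCost; gcongr

theorem modifiedCost_le_one_add_div_mul (hK : 0 < K) (hs : 0 ≤ s) (hc : ∀ x ∈ Icc 0 s, 0 ≤ c x) :
    modifiedCost K c s ≤ (1 + s / K) * c s :=
  sub_le_self _ <| mul_nonneg (one_div_pos.2 hK).le <| intervalIntegral.integral_nonneg hs hc

end SingleCost

theorem poa_core_bound_general {ι : Type*} [Fintype ι] {K M : ℝ} (hK : 0 < K) {c : ι → ℝ → ℝ}
    (hmono : ∀ n, MonotoneOn (c n) (Ici 0)) (hc0 : ∀ n, 0 ≤ c n 0) {s t : ι → ℝ}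
    (hs : ∀ n, 0 ≤ s n) (ht : ∀ n, 0 ≤ t n) (htM : ∀ n, t n ≤ M)
    (hst : ∑ n, modifiedCost K (c n) (s n) ≤ ∑ n, modifiedCost K (c n) (t n)) :
    ∑ n, c n (s n) ≤ (1 + M / K) * ∑ n, c n (t n) := by
  have c_nonneg (n : ι) {x : ℝ} (hx : 0 ≤ x) : 0 ≤ c n x :=
    (hc0 n).trans (hmono n self_mem_Ici hx hx)
  calc
    ∑ n, c n (s n) ≤ ∑ n, modifiedCost K (c n) (s n) :=
      Finset.sum_le_sum fun n _ => le_modifiedCost hK (hs n) ((hmono n).mono Icc_subset_Ici_self)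
    _ ≤ ∑ n, modifiedCost K (c n) (t n) := hst
    _ ≤ ∑ n, (1 + t n / K) * c n (t n) :=
      Finset.sum_le_sum fun n _ =>
        modifiedCost_le_one_add_div_mul hK (ht n) fun _ hx => c_nonneg n hx.1
    _ ≤ ∑ n, (1 + M / K) * c n (t n) := by
      gcongr with n
      · exact c_nonneg n (ht n)
      · exact htM n
    _ = (1 + M / K) * ∑ n, c n (t n) := (Finset.mul_sum ..).symm

/-- Core step in the price-of-anarchy bound: if `s**` minimizes the total modified cost over
`F ⊆ [0, ∞)^N` and `s* ∈ F`, then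
`∑ n, c n (s** n) ≤ (1 + (max_n s* n)/K) · ∑ n, c n (s* n)`. -/
theorem poa_core_bound
    (N : ℕ) (hN : 1 ≤ N) (K : ℝ) (hK : 0 < K)
    (c : Fin N → ℝ → ℝ)
    (hconv : ∀ n, ConvexOn ℝ (Set.Ici (0 : ℝ)) (c n))
    (hmono : ∀ n, StrictMonoOn (c n) (Set.Ici (0 : ℝ)))
    (hdiff : ∀ n, DifferentiableOn ℝ (c n) (Set.Ici (0 : ℝ)))
    (hc0 : ∀ n, 0 ≤ c n 0)
    (chat : Fin N → ℝ → ℝ)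
    (hchat : ∀ n s, chat n s = (1 + s / K) * c n s - (1 / K) * ∫ x in (0:ℝ)..s, c n x)
    (F : Set (Fin N → ℝ))
    (hFpos : ∀ s ∈ F, ∀ n, 0 ≤ s n)
    (sStar sStarStar : Fin N → ℝ)
    (hsStar : sStar ∈ F) (hsStarStar : sStarStar ∈ F)
    (hmin : ∀ t ∈ F, ∑ n, chat n (sStarStar n) ≤ ∑ n, chat n (t n)) :
    ∑ n, c n (sStarStar n) ≤
      (1 + (Finset.univ.sup' (Finset.univ_nonempty_iff.mpr
        (Fin.pos_iff_nonempty.mp hN)) sStar) / K) * ∑ n, c n (sStar n) := by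
  obtain rfl : chat = fun n => modifiedCost K (c n) := funext fun n => funext (hchat n)
  exact poa_core_bound_general hK (fun n => (hmono n).monotoneOn) hc0 (hFpos _ hsStarStar)
    (hFpos _ hsStar) (fun n => Finset.le_sup' sStar (Finset.mem_univ n)) (hmin _ hsStar)
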